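/- arXiv:2602.11486 — 2 statements merged into one kernel-verified Lean document; each statement's English description precedes it below -/
import Mathlib

section
/- Let 0 < δ ≤ Δ and let v_A¹, v_A², v_B¹ : [0,1] → [δ, Δ] be measurable with ∫₀¹ v_A¹ = ∫₀¹ v_A² = ∫₀¹ v_B¹ = 1. Define V_i(x) = ∫₀ˣ v_A^i(y) dy for i = 1, 2, and f = V₂⁻¹ ∘ V₁ : [0,1] → [0,1]. Then: (i) f is a bi-Lipschitz bijection of [0,1] onto itself; (ii) for every measurable C ⊆ [0,1], ∫_C v_A¹(x) dx = ∫_{f(C)} v_A²(x) dx; (iii) the function v_B²(x) = (v_B¹(f⁻¹(x)) / v_A¹(f⁻¹(x))) · v_A²(x) takes values in [δ²/Δ, Δ²/δ], satisfies ∫₀¹ v_B²(x) dx = 1, and ∫_C v_B¹(x) dx = ∫_{f(C)} v_B²(x) dx for every measurable C ⊆ [0,1]. -/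
open MeasureTheory Set

noncomputable section

/-- A value density: measurable, bounded in `[δ, Δ]` on `[0,1]`, integrating to 1 on `[0,1]`. -/
def IsValueDensity (δ Δ : ℝ) (v : ℝ → ℝ) : Prop :=
  Measurable v ∧ (∀ x ∈ Set.Icc (0:ℝ) 1, v x ∈ Set.Icc δ Δ) ∧
    (∫ x in Set.Icc (0:ℝ) 1, v x) = 1

/-- The cumulative value function `V(x) = ∫₀ˣ v(y) dy`. -/
def cumVal (v : ℝ → ℝ) : ℝ → ℝ := fun x => ∫ y in (0:ℝ)..x, v y

/-- The warping map `f = V₂⁻¹ ∘ V₁`, where `V₂⁻¹` is the inverse of `V₂` on `[0,1]`. -/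
def warp (vA1 vA2 : ℝ → ℝ) : ℝ → ℝ :=
  fun x => Function.invFunOn (cumVal vA2) (Set.Icc 0 1) (cumVal vA1 x)

/-- The inverse `f⁻¹` of the warping map on `[0,1]`. -/
def warpInv (vA1 vA2 : ℝ → ℝ) : ℝ → ℝ :=
  Function.invFunOn (warp vA1 vA2) (Set.Icc 0 1)

/-- The warped Bob density `v_B²(x) = (v_B¹(f⁻¹(x)) / v_A¹(f⁻¹(x))) · v_A²(x)`. -/
def warpedDensity (vA1 vA2 vB1 : ℝ → ℝ) : ℝ → ℝ :=
  fun x => vB1 (warpInv vA1 vA2 x) / vA1 (warpInv vA1 vA2 x) * vA2 x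

theorem vw_intble {δ Δ : ℝ} {v : ℝ → ℝ} (hδ : 0 < δ) (hv : IsValueDensity δ Δ v) :
    IntegrableOn v (Icc 0 1) := by
  obtain ⟨hm, hb, -⟩ := hv
  refine Measure.integrableOn_of_bounded (M := Δ) (by simp) hm.aestronglyMeasurable ?_
  filter_upwards [ae_restrict_mem measurableSet_Icc] with x hx
  have := hb x hx
  rw [Real.norm_eq_abs, abs_of_nonneg (by linarith [this.1])]
  exact this.2

theorem vw_intble' {δ Δ : ℝ} {v : ℝ → ℝ} (hδ : 0 < δ) (hv : IsValueDensity δ Δ v)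
    {x y : ℝ} (hx : x ∈ Icc (0:ℝ) 1) (hy : y ∈ Icc (0:ℝ) 1) :
    IntervalIntegrable v volume x y := by
  refine ((vw_intble hδ hv).mono_set ?_).intervalIntegrable
  exact (convex_Icc (0:ℝ) 1).ordConnected.uIcc_subset hx hy

theorem vw_diff {δ Δ : ℝ} {v : ℝ → ℝ} (hδ : 0 < δ) (hv : IsValueDensity δ Δ v)
    {x y : ℝ} (hx : x ∈ Icc (0:ℝ) 1) (hy : y ∈ Icc (0:ℝ) 1) (hxy : x ≤ y) :
    δ * (y - x) ≤ cumVal v y - cumVal v x ∧ cumVal v y - cumVal v x ≤ Δ * (y - x) := by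
  have h0 : (0:ℝ) ∈ Icc (0:ℝ) 1 := by simp
  have e : cumVal v y - cumVal v x = ∫ t in x..y, v t := by
    unfold cumVal
    exact intervalIntegral.integral_interval_sub_left (vw_intble' hδ hv h0 hy)
      (vw_intble' hδ hv h0 hx)
  have hb : ∀ t ∈ Icc x y, v t ∈ Icc δ Δ := fun t ht =>
    hv.2.1 t ⟨hx.1.trans ht.1, ht.2.trans hy.2⟩
  rw [e]
  constructor
  · have := intervalIntegral.integral_mono_on hxy (f := fun _ => δ) (g := v) (by simp)
      (vw_intble' hδ hv hx hy) (fun t ht => (hb t ht).1)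
    simp at this; linarith
  · have := intervalIntegral.integral_mono_on hxy (f := v) (g := fun _ => Δ)
      (vw_intble' hδ hv hx hy) (by simp) (fun t ht => (hb t ht).2)
    simp at this; linarith

theorem vw_abs {δ Δ : ℝ} {v : ℝ → ℝ} (hδ : 0 < δ) (hv : IsValueDensity δ Δ v)
    {x y : ℝ} (hx : x ∈ Icc (0:ℝ) 1) (hy : y ∈ Icc (0:ℝ) 1) :
    δ * |x - y| ≤ |cumVal v x - cumVal v y| ∧ |cumVal v x - cumVal v y| ≤ Δ * |x - y| := by
  rcases le_total x y with h | h
  · have := vw_diff hδ hv hx hy h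
    have h2 : 0 ≤ δ * (y - x) := mul_nonneg hδ.le (by linarith)
    rw [abs_sub_comm x y, abs_sub_comm (cumVal v x), abs_of_nonneg (by linarith : 0 ≤ y - x),
      abs_of_nonneg (by linarith)]
    exact this
  · have := vw_diff hδ hv hy hx h
    have h2 : 0 ≤ δ * (x - y) := mul_nonneg hδ.le (by linarith)
    rw [abs_of_nonneg (by linarith : 0 ≤ x - y), abs_of_nonneg (by linarith)]
    exact this

theorem vw_strictMono {δ Δ : ℝ} {v : ℝ → ℝ} (hδ : 0 < δ) (hv : IsValueDensity δ Δ v) :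
    StrictMonoOn (cumVal v) (Icc 0 1) := by
  intro x hx y hy hxy
  have := vw_diff hδ hv hx hy hxy.le
  have h2 : 0 < δ * (y - x) := mul_pos hδ (by linarith)
  linarith

theorem vw_zero (v : ℝ → ℝ) : cumVal v 0 = 0 := by simp [cumVal]

theorem vw_eq (v : ℝ → ℝ) {x : ℝ} (hx : 0 ≤ x) : cumVal v x = ∫ t in Icc 0 x, v t := by
  rw [cumVal, intervalIntegral.integral_of_le hx, integral_Icc_eq_integral_Ioc]

theorem vw_one {δ Δ : ℝ} {v : ℝ → ℝ} (hv : IsValueDensity δ Δ v) : cumVal v 1 = 1 := by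
  rw [vw_eq v zero_le_one]; exact hv.2.2

theorem vw_lip {g : ℝ → ℝ} {K : ℝ} (h : ∀ x ∈ Icc (0:ℝ) 1, ∀ y ∈ Icc (0:ℝ) 1,
    |g x - g y| ≤ K * |x - y|) : ContinuousOn g (Icc 0 1) := by
  have : LipschitzOnWith K.toNNReal g (Icc 0 1) := by
    refine LipschitzOnWith.of_dist_le_mul fun x hx y hy => ?_
    rw [Real.dist_eq, Real.dist_eq]
    refine (h x hx y hy).trans ?_
    exact mul_le_mul_of_nonneg_right (Real.le_coe_toNNReal K) (abs_nonneg _)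
  exact this.continuousOn

theorem vw_bij {δ Δ : ℝ} {v : ℝ → ℝ} (hδ : 0 < δ) (hv : IsValueDensity δ Δ v) :
    BijOn (cumVal v) (Icc 0 1) (Icc 0 1) := by
  have hm := vw_strictMono hδ hv
  refine ⟨fun x hx => ?_, hm.injOn, ?_⟩
  · have h1 := hm.monotoneOn (by simp : (0:ℝ) ∈ Icc (0:ℝ) 1) hx hx.1
    have h2 := hm.monotoneOn hx (by simp : (1:ℝ) ∈ Icc (0:ℝ) 1) hx.2
    rw [vw_zero] at h1; rw [vw_one hv] at h2
    exact ⟨h1, h2⟩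
  · have hc : ContinuousOn (cumVal v) (Icc 0 1) :=
      vw_lip (fun x hx y hy => (vw_abs hδ hv hx hy).2)
    have := intermediate_value_Icc zero_le_one hc
    rwa [vw_zero, vw_one hv] at this

section
variable {δ Δ : ℝ} {v w : ℝ → ℝ}

theorem vw_warp (hδ : 0 < δ) (hv : IsValueDensity δ Δ v) (hw : IsValueDensity δ Δ w)
    {x : ℝ} (hx : x ∈ Icc (0:ℝ) 1) :
    warp v w x ∈ Icc (0:ℝ) 1 ∧ cumVal w (warp v w x) = cumVal v x := by
  have h := (vw_bij hδ hw).surjOn ((vw_bij hδ hv).mapsTo hx)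
  exact ⟨Function.invFunOn_mem h, Function.invFunOn_eq h⟩

theorem vw_warp_warp (hδ : 0 < δ) (hv : IsValueDensity δ Δ v) (hw : IsValueDensity δ Δ w)
    {x : ℝ} (hx : x ∈ Icc (0:ℝ) 1) : warp w v (warp v w x) = x := by
  have h1 := vw_warp hδ hv hw hx
  have h2 := vw_warp hδ hw hv h1.1
  exact (vw_bij hδ hv).injOn h2.1 hx (h2.2.trans h1.2)

theorem vw_warp_bij (hδ : 0 < δ) (hv : IsValueDensity δ Δ v) (hw : IsValueDensity δ Δ w) :
    BijOn (warp v w) (Icc 0 1) (Icc 0 1) := by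
  refine ⟨fun x hx => (vw_warp hδ hv hw hx).1, fun x hx y hy h => ?_, fun y hy => ?_⟩
  · rw [← vw_warp_warp hδ hv hw hx, h, vw_warp_warp hδ hv hw hy]
  · exact ⟨warp w v y, (vw_warp hδ hw hv hy).1, vw_warp_warp hδ hw hv hy⟩

theorem vw_warpInv (hδ : 0 < δ) (hv : IsValueDensity δ Δ v) (hw : IsValueDensity δ Δ w)
    {x : ℝ} (hx : x ∈ Icc (0:ℝ) 1) : warpInv v w x = warp w v x := by
  have h := (vw_warp_bij hδ hv hw).surjOn hx
  have h1 : warpInv v w x ∈ Icc (0:ℝ) 1 := Function.invFunOn_mem h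
  have h2 : warp v w (warpInv v w x) = x := Function.invFunOn_eq h
  exact (vw_warp_bij hδ hv hw).injOn h1 (vw_warp hδ hw hv hx).1
    (h2.trans (vw_warp_warp hδ hw hv hx).symm)

theorem vw_upper (hδ : 0 < δ) (hv : IsValueDensity δ Δ v) (hw : IsValueDensity δ Δ w)
    {x y : ℝ} (hx : x ∈ Icc (0:ℝ) 1) (hy : y ∈ Icc (0:ℝ) 1) :
    |warp v w x - warp v w y| ≤ Δ / δ * |x - y| := by
  have h1 := vw_warp hδ hv hw hx
  have h2 := vw_warp hδ hv hw hy
  have h3 := (vw_abs hδ hw h1.1 h2.1).1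
  rw [h1.2, h2.2] at h3
  have h4 := h3.trans (vw_abs hδ hv hx hy).2
  rw [div_mul_eq_mul_div, le_div_iff₀ hδ]; linarith

theorem vw_lower (hδ : 0 < δ) (hδΔ : δ ≤ Δ) (hv : IsValueDensity δ Δ v)
    (hw : IsValueDensity δ Δ w)
    {x y : ℝ} (hx : x ∈ Icc (0:ℝ) 1) (hy : y ∈ Icc (0:ℝ) 1) :
    δ / Δ * |x - y| ≤ |warp v w x - warp v w y| := by
  have h1 := vw_warp hδ hv hw hx
  have h2 := vw_warp hδ hv hw hy
  have h3 := (vw_abs hδ hw h1.1 h2.1).2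
  rw [h1.2, h2.2] at h3
  have h4 := (vw_abs hδ hv hx hy).1.trans h3
  rw [div_mul_eq_mul_div, div_le_iff₀ (hδ.trans_le hδΔ)]; linarith

/-- extension of a function on the unit interval -/
def vwExt (g : ℝ → ℝ) : ℝ → ℝ := fun x => g (max 0 (min 1 x))

theorem vwExt_eq (g : ℝ → ℝ) {x : ℝ} (hx : x ∈ Icc (0:ℝ) 1) : vwExt g x = g x := by
  simp [vwExt, hx.1, hx.2]

theorem vwExt_cont (hδ : 0 < δ) (hv : IsValueDensity δ Δ v) (hw : IsValueDensity δ Δ w) :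
    Continuous (vwExt (warp v w)) := by
  have h : ContinuousOn (warp v w) (Icc 0 1) :=
    vw_lip (fun x hx y hy => vw_upper hδ hv hw hx hy)
  refine h.comp_continuous (by fun_prop) (fun x => ?_)
  simp

/-- the measure on the unit interval with density `v` -/
def vwMeas (v : ℝ → ℝ) : Measure ℝ :=
  (volume.restrict (Icc 0 1)).withDensity (fun x => ENNReal.ofReal (v x))

theorem vwMeas_apply (v : ℝ → ℝ) {S : Set ℝ} (hS : MeasurableSet S) :
    vwMeas v S = ∫⁻ x in S ∩ Icc 0 1, ENNReal.ofReal (v x) := by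
  rw [vwMeas, withDensity_apply _ hS, Measure.restrict_restrict hS]

theorem vwMeas_Icc (hδ : 0 < δ) (hv : IsValueDensity δ Δ v) {S : Set ℝ} (hS : MeasurableSet S)
    {s : ℝ} (hs : s ∈ Icc (0:ℝ) 1) (h : S ∩ Icc 0 1 = Icc 0 s) :
    vwMeas v S = ENNReal.ofReal (cumVal v s) := by
  rw [vwMeas_apply v hS, h, vw_eq v hs.1]
  have hsub : Icc 0 s ⊆ Icc (0:ℝ) 1 := Icc_subset_Icc_right hs.2
  rw [ofReal_integral_eq_lintegral_ofReal ((vw_intble hδ hv).mono_set hsub)]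
  filter_upwards [ae_restrict_mem measurableSet_Icc] with x hx
  exact hδ.le.trans (hv.2.1 x (hsub hx)).1

theorem vwMeas_finite (hδ : 0 < δ) (hv : IsValueDensity δ Δ v) : IsFiniteMeasure (vwMeas v) := by
  refine ⟨?_⟩
  rw [vwMeas_Icc hδ hv MeasurableSet.univ (s := 1) (by simp) (by simp)]
  exact ENNReal.ofReal_lt_top

theorem vwMeas_map (hδ : 0 < δ) (hv : IsValueDensity δ Δ v) (hw : IsValueDensity δ Δ w) :
    (vwMeas v).map (vwExt (warp v w)) = vwMeas w := by
  have := vwMeas_finite hδ hv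
  have hG := (vwExt_cont hδ hv hw).measurable
  refine Measure.ext_of_Iic _ _ fun t => ?_
  rw [Measure.map_apply hG measurableSet_Iic]
  have hP : MeasurableSet (vwExt (warp v w) ⁻¹' Iic t) := hG measurableSet_Iic
  rcases lt_or_ge t 0 with h0 | h0
  · rw [vwMeas_apply _ hP, vwMeas_apply _ measurableSet_Iic]
    have e1 : vwExt (warp v w) ⁻¹' Iic t ∩ Icc 0 1 = ∅ := by
      ext x
      simp only [mem_inter_iff, mem_preimage, mem_Iic, mem_empty_iff_false, iff_false, not_and]
      intro h hx
      rw [vwExt_eq _ hx] at h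
      linarith [(vw_warp hδ hv hw hx).1.1]
    have e2 : Iic t ∩ Icc (0:ℝ) 1 = ∅ := by
      ext x
      simp only [mem_inter_iff, mem_Iic, mem_empty_iff_false, iff_false, not_and]
      intro h hx
      linarith [hx.1]
    rw [e1, e2]; simp
  rcases lt_or_ge 1 t with h1 | h1
  · have e1 : vwExt (warp v w) ⁻¹' Iic t ∩ Icc 0 1 = Icc 0 1 := by
      refine inter_eq_right.2 fun x hx => ?_
      rw [mem_preimage, vwExt_eq _ hx]
      exact (vw_warp hδ hv hw hx).1.2.trans h1.le
    have e2 : Iic t ∩ Icc (0:ℝ) 1 = Icc 0 1 :=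
      inter_eq_right.2 fun x hx => hx.2.trans h1.le
    rw [vwMeas_Icc hδ hv hP (by simp) e1, vwMeas_Icc hδ hw measurableSet_Iic (by simp) e2,
      vw_one hv, vw_one hw]
  · have ht : t ∈ Icc (0:ℝ) 1 := ⟨h0, h1⟩
    have hh := vw_warp hδ hw hv ht
    have e1 : vwExt (warp v w) ⁻¹' Iic t ∩ Icc 0 1 = Icc 0 (warp w v t) := by
      have key : ∀ x ∈ Icc (0:ℝ) 1, (vwExt (warp v w) x ≤ t ↔ x ≤ warp w v t) := by
        intro x hx
        have hg := vw_warp hδ hv hw hx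
        rw [vwExt_eq _ hx, ← (vw_strictMono hδ hw).le_iff_le hg.1 ht, hg.2, ← hh.2,
          (vw_strictMono hδ hv).le_iff_le hx hh.1]
      ext x
      constructor
      · rintro ⟨h, hx⟩
        exact ⟨hx.1, (key x hx).1 h⟩
      · intro h
        have hx : x ∈ Icc (0:ℝ) 1 := ⟨h.1, h.2.trans hh.1.2⟩
        exact ⟨(key x hx).2 h.2, hx⟩
    have e2 : Iic t ∩ Icc (0:ℝ) 1 = Icc 0 t := by
      ext x
      constructor
      · rintro ⟨h, hx⟩; exact ⟨hx.1, h⟩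
      · intro h; exact ⟨h.2, h.1, h.2.trans h1⟩
    rw [vwMeas_Icc hδ hv hP hh.1 e1, vwMeas_Icc hδ hw measurableSet_Iic ht e2, hh.2]

theorem vw_integral (hδ : 0 < δ) (hv : IsValueDensity δ Δ v) (k : ℝ → ℝ)
    {S : Set ℝ} (hS : MeasurableSet S) :
    ∫ x in S, k x ∂(vwMeas v) = ∫ x in S ∩ Icc 0 1, k x * v x := by
  rw [vwMeas, setIntegral_withDensity_eq_setIntegral_toReal_smul (by have := hv.1; fun_prop)
    (by simp) _ hS, Measure.restrict_restrict hS]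
  refine setIntegral_congr_fun (hS.inter measurableSet_Icc) fun x hx => ?_
  have : 0 ≤ v x := hδ.le.trans (hv.2.1 x hx.2).1
  simp [ENNReal.toReal_ofReal this, mul_comm]

theorem vw_main (hδ : 0 < δ) (hv : IsValueDensity δ Δ v) (hw : IsValueDensity δ Δ w)
    {b : ℝ → ℝ} (hb : Measurable b) {C : Set ℝ} (hC : C ⊆ Icc 0 1) (hCm : MeasurableSet C) :
    ∫ x in C, b x = ∫ x in warp v w '' C, warpedDensity v w b x := by
  have hG := (vwExt_cont hδ hv hw).measurable
  have hH := (vwExt_cont hδ hw hv).measurable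
  have himg : warp v w '' C = vwExt (warp w v) ⁻¹' C ∩ Icc 0 1 := by
    ext y
    constructor
    · rintro ⟨x, hx, rfl⟩
      have h := (vw_warp hδ hv hw (hC hx)).1
      refine ⟨?_, h⟩
      rw [mem_preimage, vwExt_eq _ h, vw_warp_warp hδ hv hw (hC hx)]
      exact hx
    · rintro ⟨h, hy⟩
      rw [mem_preimage, vwExt_eq _ hy] at h
      exact ⟨_, h, vw_warp_warp hδ hw hv hy⟩
  have hS : MeasurableSet (vwExt (warp w v) ⁻¹' C) := hH hCm
  have hq : Measurable (fun x => b x / v x) := hb.div hv.1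
  rw [himg]
  have e1 : ∫ x in vwExt (warp w v) ⁻¹' C ∩ Icc 0 1, warpedDensity v w b x
      = ∫ x in vwExt (warp w v) ⁻¹' C,
        b (vwExt (warp w v) x) / v (vwExt (warp w v) x) ∂(vwMeas w) := by
    rw [vw_integral hδ hw (fun x => b (vwExt (warp w v) x) / v (vwExt (warp w v) x)) hS]
    refine setIntegral_congr_fun (hS.inter measurableSet_Icc) fun x hx => ?_
    simp only [warpedDensity]
    rw [vwExt_eq _ hx.2, vw_warpInv hδ hv hw hx.2]
  have hGS : MeasurableSet (vwExt (warp v w) ⁻¹' (vwExt (warp w v) ⁻¹' C)) := hG hS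
  rw [e1, ← vwMeas_map hδ hv hw, setIntegral_map hS
    (f := fun x => b (vwExt (warp w v) x) / v (vwExt (warp w v) x))
    (hq.comp hH).aestronglyMeasurable hG.aemeasurable,
    vw_integral hδ hv _ hGS]
  have key : ∀ x ∈ Icc (0:ℝ) 1, vwExt (warp w v) (vwExt (warp v w) x) = x := by
    intro x hx
    rw [vwExt_eq _ hx, vwExt_eq _ (vw_warp hδ hv hw hx).1, vw_warp_warp hδ hv hw hx]
  have e2 : vwExt (warp v w) ⁻¹' (vwExt (warp w v) ⁻¹' C) ∩ Icc 0 1 = C := by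
    ext x
    constructor
    · rintro ⟨h, hx⟩
      rw [mem_preimage, mem_preimage, key x hx] at h
      exact h
    · intro h
      refine ⟨?_, hC h⟩
      rw [mem_preimage, mem_preimage, key x (hC h)]
      exact h
  rw [e2]
  refine setIntegral_congr_fun hCm fun x hx => ?_
  have : 0 < v x := hδ.trans_le (hv.2.1 x (hC hx)).1
  simp only [key x (hC hx)]
  rw [div_mul_cancel₀ _ this.ne']

end

/-- valuation warping: for value densities `v_A¹, v_A², v_B¹` with bounds
`0 < δ ≤ Δ`, the map `f = V₂⁻¹ ∘ V₁` is a bi-Lipschitz bijection of `[0,1]` onto itself,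
preserves Alice values (`∫_C v_A¹ = ∫_{f(C)} v_A²`), and the warped density
`v_B²(x) = (v_B¹(f⁻¹ x)/v_A¹(f⁻¹ x))·v_A²(x)` takes values in `[δ²/Δ, Δ²/δ]`, integrates
to 1, and satisfies `∫_C v_B¹ = ∫_{f(C)} v_B²` for every measurable `C ⊆ [0,1]`. -/
theorem valuation_warping (δ Δ : ℝ) (hδ : 0 < δ) (hδΔ : δ ≤ Δ)
    (vA1 vA2 vB1 : ℝ → ℝ)
    (hA1 : IsValueDensity δ Δ vA1) (hA2 : IsValueDensity δ Δ vA2)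
    (hB1 : IsValueDensity δ Δ vB1) :
    -- (i) `f` is a bi-Lipschitz bijection of `[0,1]` onto itself
    (Set.BijOn (warp vA1 vA2) (Set.Icc 0 1) (Set.Icc 0 1) ∧
      ∃ K₁ K₂ : ℝ, 0 < K₁ ∧
        ∀ x ∈ Set.Icc (0:ℝ) 1, ∀ y ∈ Set.Icc (0:ℝ) 1,
          K₁ * |x - y| ≤ |warp vA1 vA2 x - warp vA1 vA2 y| ∧
          |warp vA1 vA2 x - warp vA1 vA2 y| ≤ K₂ * |x - y|) ∧
    -- (ii) Alice's values are preserved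
    (∀ C : Set ℝ, C ⊆ Set.Icc 0 1 → MeasurableSet C →
      ∫ x in C, vA1 x = ∫ x in (warp vA1 vA2) '' C, vA2 x) ∧
    -- (iii) the warped Bob density is a bounded density matching `v_B¹` through `f`
    ((∀ x ∈ Set.Icc (0:ℝ) 1,
        warpedDensity vA1 vA2 vB1 x ∈ Set.Icc (δ ^ 2 / Δ) (Δ ^ 2 / δ)) ∧
      (∫ x in Set.Icc (0:ℝ) 1, warpedDensity vA1 vA2 vB1 x) = 1 ∧
      ∀ C : Set ℝ, C ⊆ Set.Icc 0 1 → MeasurableSet C →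
        ∫ x in C, vB1 x = ∫ x in (warp vA1 vA2) '' C, warpedDensity vA1 vA2 vB1 x) := by
  have hΔ : 0 < Δ := hδ.trans_le hδΔ
  have hbij := vw_warp_bij hδ hA1 hA2
  refine ⟨⟨hbij, δ / Δ, Δ / δ, by positivity, fun x hx y hy =>
    ⟨vw_lower hδ hδΔ hA1 hA2 hx hy, vw_upper hδ hA1 hA2 hx hy⟩⟩, ?_, ?_, ?_, ?_⟩
  · intro C hC hCm
    rw [vw_main hδ hA1 hA2 hA1.1 hC hCm]
    -- the image lies in the unit interval, where the warped density is `vA2`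
    have hsub : warp vA1 vA2 '' C ⊆ Icc 0 1 := by
      rintro _ ⟨x, hx, rfl⟩
      exact hbij.mapsTo (hC hx)
    have hae : ∀ x ∈ Icc (0:ℝ) 1, warpedDensity vA1 vA2 vA1 x = vA2 x := by
      intro x hx
      have h := (vw_warp hδ hA2 hA1 hx).1
      have : 0 < vA1 (warp vA2 vA1 x) := hδ.trans_le (hA1.2.1 _ h).1
      simp only [warpedDensity]
      rw [vw_warpInv hδ hA1 hA2 hx, div_self this.ne', one_mul]
    refine integral_congr_ae ?_
    exact ae_mono (Measure.restrict_mono hsub le_rfl)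
      ((ae_restrict_mem measurableSet_Icc).mono hae)
  · intro x hx
    have h := (vw_warp hδ hA2 hA1 hx).1
    obtain ⟨a1, a2⟩ := hA1.2.1 _ h
    obtain ⟨b1, b2⟩ := hB1.2.1 _ h
    obtain ⟨c1, c2⟩ := hA2.2.1 _ hx
    simp only [warpedDensity]
    rw [vw_warpInv hδ hA1 hA2 hx, div_mul_eq_mul_div]
    constructor
    · refine div_le_div₀ (by nlinarith) (by nlinarith) (by linarith) a2
    · refine div_le_div₀ (by positivity) (by nlinarith) hδ a1
  · have h := vw_main hδ hA1 hA2 hB1.1 Subset.rfl measurableSet_Icc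
    rw [hbij.image_eq] at h
    exact h.symm.trans hB1.2.2
  · intro C hC hCm
    exact vw_main hδ hA1 hA2 hB1.1 hC hCm

end
end

section
/- Let k ≥ 2 be an integer, z ∈ [5/6, 11/12], and w ∈ (0, 1/48]. Let (A, B) be the alternating partition of [0,1] induced by k cut points, and suppose ∫_B σ_{w;z}^k(x) dx > 1/2 and ∫_B σ₀^k(x) dx < 1/2 (so that Bobs with value densities σ_{w;z}^k and σ₀^k strictly prefer different pieces of the partition). Then μ(B) ≤ 2/3 − 1/(6k). -/
open MeasureTheory Set

noncomputable section

attribute [local instance] Classical.propDecidable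

/-- The value of a piece `S` under density `v`. -/
def pieceVal (v : ℝ → ℝ) (S : Set ℝ) : ℝ := ∫ x in S, v x

/-- Extended cut points: `0, c 0, …, c (k-1), 1`. -/
def extCuts (k : ℕ) (c : Fin k → ℝ) : ℕ → ℝ := fun i =>
  if i = 0 then 0 else if h : i - 1 < k then c ⟨i - 1, h⟩ else 1

/-- A valid vector of `k` cut points: nondecreasing, within `[0,1]`. -/
def ValidCuts (k : ℕ) (c : Fin k → ℝ) : Prop :=
  Monotone c ∧ ∀ i, c i ∈ Set.Icc (0:ℝ) 1

/-- The two pieces of the alternating partition induced by cuts `c`: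
`true` gives the union of even-indexed intervals, `false` the odd-indexed ones. -/
def altPiece (k : ℕ) (c : Fin k → ℝ) (b : Bool) : Set ℝ :=
  ⋃ i ∈ Finset.range (k + 1),
    if decide (i % 2 = 0) = b then Set.Icc (extCuts k c i) (extCuts k c (i + 1)) else ∅

/-- Alice's Stackelberg value with `k` cuts: max of `V_A(Z_A)` over alternating partitions
`(Z_A, Z_B)` induced by `k` cut points with `V_B(Z_B) ≥ 1/2`. -/
def stackelbergValue (k : ℕ) (vA vB : ℝ → ℝ) : ℝ :=
  sSup { u : ℝ | ∃ (c : Fin k → ℝ) (b : Bool), ValidCuts k c ∧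
    1 / 2 ≤ pieceVal vB (altPiece k c (!b)) ∧ u = pieceVal vA (altPiece k c b) }

/-- A history of play: the list of (Alice's cuts, Bob's choice) in past rounds. -/
abbrev Hist (k : ℕ) := List ((Fin k → ℝ) × Bool)

/-- Alice's deterministic strategy: horizon and history ↦ next cut vector. -/
abbrev AliceStrategy (k : ℕ) := ℕ → Hist k → (Fin k → ℝ)

/-- Bob's deterministic strategy: horizon, history, and Alice's current cuts ↦ choice. -/
abbrev BobStrategy (k : ℕ) := ℕ → Hist k → (Fin k → ℝ) → Bool

/-- The history of play after `t` rounds. -/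
def playHist (k : ℕ) (SA : AliceStrategy k) (SB : BobStrategy k) (T : ℕ) : ℕ → Hist k
  | 0 => []
  | t + 1 =>
      let h := playHist k SA SB T t
      let cuts := SA T h
      h ++ [(cuts, SB T h cuts)]

/-- Alice's cuts in round `t` (0-indexed). -/
def roundCuts (k : ℕ) (SA : AliceStrategy k) (SB : BobStrategy k) (T t : ℕ) : Fin k → ℝ :=
  SA T (playHist k SA SB T t)

/-- Bob's choice in round `t` (0-indexed). -/
def roundChoice (k : ℕ) (SA : AliceStrategy k) (SB : BobStrategy k) (T t : ℕ) : Bool :=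
  SB T (playHist k SA SB T t) (roundCuts k SA SB T t)

/-- Alice's Stackelberg regret over horizon `T`: in each round she receives the value of
the piece Bob did not choose. -/
def aliceRegret (k : ℕ) (vA vB : ℝ → ℝ) (SA : AliceStrategy k) (SB : BobStrategy k)
    (T : ℕ) : ℝ :=
  ∑ t ∈ Finset.range T,
    (stackelbergValue k vA vB -
      pieceVal vA (altPiece k (roundCuts k SA SB T t) (!(roundChoice k SA SB T t))))

/-- Bob's regret over horizon `T` relative to always choosing his preferred piece. -/
def bobRegret (k : ℕ) (vB : ℝ → ℝ) (SA : AliceStrategy k) (SB : BobStrategy k) (T : ℕ) : ℝ :=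
  ∑ t ∈ Finset.range T,
    (max (pieceVal vB (altPiece k (roundCuts k SA SB T t) true))
        (pieceVal vB (altPiece k (roundCuts k SA SB T t) false)) -
      pieceVal vB (altPiece k (roundCuts k SA SB T t) (roundChoice k SA SB T t)))

/-- Bob's strategy guarantees regret at most `R T` against every Alice strategy and horizon. -/
def BobGuarantees (k : ℕ) (vB : ℝ → ℝ) (SB : BobStrategy k) (R : ℕ → ℝ) : Prop :=
  ∀ (SA : AliceStrategy k) (T : ℕ), bobRegret k vB SA SB T ≤ R T

/-- The myopic Bob: chooses the piece of larger `V_B`-value, breaking ties towards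
the piece of smaller `V_A`-value. -/
def myopicBob (k : ℕ) (vA vB : ℝ → ℝ) : BobStrategy k := fun _ _ c =>
  if pieceVal vB (altPiece k c false) < pieceVal vB (altPiece k c true) then true
  else if pieceVal vB (altPiece k c true) < pieceVal vB (altPiece k c false) then false
  else if pieceVal vA (altPiece k c true) ≤ pieceVal vA (altPiece k c false) then true
  else false

/-- Alice's strategy always produces valid cut vectors. -/
def AliceValid (k : ℕ) (SA : AliceStrategy k) : Prop := ∀ T h, ValidCuts k (SA T h)

/-- The common length of the high-value intervals: `ℓ^k = 1/(3(⌊k/2⌋ + 1/2))`. -/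
def ell (k : ℕ) : ℝ := 1 / (3 * ((k / 2 : ℕ) + 1 / 2))

/-- The number of high-value intervals: `⌊k/2⌋ + 1`. -/
def nHigh (k : ℕ) : ℕ := k / 2 + 1

/-- The number of low-value intervals: `⌈k/2⌉`. -/
def nLow (k : ℕ) : ℕ := (k + 1) / 2

/-- The common length of the low-value intervals. -/
def lowLen (k : ℕ) : ℝ := (1 - nHigh k * ell k) / nLow k

/-- Left endpoint of the `j`-th interval (0-indexed; the intervals alternate
high, low, high, …, starting with a high-value interval). -/
def bd (k : ℕ) (j : ℕ) : ℝ := ((j + 1) / 2 : ℕ) * ell k + (j / 2 : ℕ) * lowLen k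

/-- The union `H^k` of the high-value intervals (even-indexed). -/
def Hset (k : ℕ) : Set ℝ :=
  ⋃ j ∈ Finset.range (k + 1),
    if j % 2 = 0 then Set.Icc (bd k j) (bd k (j + 1)) else ∅

/-- The union `L^k` of the (interiors of the) low-value intervals (odd-indexed). -/
def Lset (k : ℕ) : Set ℝ :=
  ⋃ j ∈ Finset.range (k + 1),
    if j % 2 = 1 then Set.Ioo (bd k j) (bd k (j + 1)) else ∅

/-- The density of the low-value region: `(1 - (3/2)μ(H^k))/μ(L^k)`. -/
def lowDens (k : ℕ) : ℝ :=
  (1 - 3 / 2 * (volume (Hset k)).toReal) / (volume (Lset k)).toReal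

/-- The unspiked value density `σ₀^k`: `3/2` on `H^k`, `lowDens k` elsewhere. -/
def sigma0 (k : ℕ) : ℝ → ℝ := fun x => if x ∈ Hset k then 3 / 2 else lowDens k

/-- The spiked value density `σ_{w;z}^k`: equal to `2` for `x/ℓ^k ∈ (z-w, z]`, to `1` for
`x/ℓ^k ∈ (z, z+w)`, and to `σ₀^k(x)` otherwise. -/
def sigmaSpike (k : ℕ) (w z : ℝ) : ℝ → ℝ := fun x =>
  if x / ell k ∈ Set.Ioc (z - w) z then 2
  else if x / ell k ∈ Set.Ioo z (z + w) then 1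
  else sigma0 k x

/-! ### Helper lemmas -/

lemma mem_altPiece_iff (k : ℕ) (c : Fin k → ℝ) (b : Bool) (t : ℝ) :
    t ∈ altPiece k c b ↔ ∃ i, i ≤ k ∧ ((i % 2 = 0) ↔ b = true) ∧
      t ∈ Set.Icc (extCuts k c i) (extCuts k c (i + 1)) := by
  unfold altPiece
  simp only [Set.mem_iUnion, Finset.mem_range, exists_prop]
  refine exists_congr fun i => ?_
  rw [Nat.lt_succ_iff]
  refine and_congr_right fun _ => ?_
  by_cases h : i % 2 = 0 <;> cases b <;> simp [h]

lemma extCuts_mono (k : ℕ) (c : Fin k → ℝ) (hc : ValidCuts k c) : Monotone (extCuts k c) := by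
  refine monotone_nat_of_le_succ fun n => ?_
  unfold extCuts
  rcases Nat.eq_zero_or_pos n with rfl | hn
  · by_cases h : 0 < k
    · simpa [h] using (hc.2 ⟨0, h⟩).1
    · simp [h]
  · have h0 : n ≠ 0 := by omega
    simp only [h0, if_false, Nat.succ_ne_zero, Nat.add_sub_cancel]
    by_cases h1 : n < k
    · have h2 : n - 1 < k := by omega
      simp only [h1, h2, dif_pos]
      exact hc.1 (by simp [Fin.le_def])
    · by_cases h2 : n - 1 < k
      · simp only [h1, h2, dif_pos, dif_neg, not_false_iff]
        exact (hc.2 _).2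
      · simp only [h1, h2, dif_neg, not_false_iff]; exact le_rfl

lemma extCuts_zero (k : ℕ) (c : Fin k → ℝ) : extCuts k c 0 = 0 := by simp [extCuts]

lemma extCuts_last (k : ℕ) (c : Fin k → ℝ) : extCuts k c (k + 1) = 1 := by simp [extCuts]

lemma extCuts_cover (k : ℕ) (c : Fin k → ℝ) (t : ℝ) (h0 : 0 ≤ t) (n : ℕ)
    (h : t ≤ extCuts k c (n + 1)) :
    ∃ i, i ≤ n ∧ t ∈ Set.Icc (extCuts k c i) (extCuts k c (i + 1)) := by
  induction n with
  | zero => exact ⟨0, le_rfl, by rw [extCuts_zero]; exact h0, h⟩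
  | succ n ih =>
    by_cases h1 : t ≤ extCuts k c (n + 1)
    · obtain ⟨i, hi, hm⟩ := ih h1
      exact ⟨i, by omega, hm⟩
    · exact ⟨n + 1, le_rfl, (not_le.mp h1).le, h⟩

/-- `k` cuts cannot separate `k+2` alternating points. -/
lemma no_alternation (k : ℕ) (c : Fin k → ℝ) (hc : ValidCuts k c) (b : Bool) (p : ℕ → ℝ)
    (hlt : ∀ j, j ≤ k → p j < p (j + 1)) (h01 : ∀ j, j ≤ k + 1 → p j ∈ Set.Icc (0:ℝ) 1)
    (hB : ∀ j, j ≤ k + 1 → (p j ∈ altPiece k c b ↔ j % 2 = 0)) : False := by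
  have key : ∀ j, j ≤ k + 1 → ∃ i, i ≤ k ∧ (((i % 2 = 0) ↔ b = true) ↔ j % 2 = 0) ∧
      p j ∈ Set.Icc (extCuts k c i) (extCuts k c (i + 1)) := by
    intro j hj
    by_cases h : j % 2 = 0
    · obtain ⟨i, hi, hb, hm⟩ := (mem_altPiece_iff _ _ _ _).1 ((hB j hj).2 h)
      exact ⟨i, hi, by simp [hb, h], hm⟩
    · obtain ⟨i, hi, hm⟩ := extCuts_cover k c (p j) (h01 j hj).1 k
        (by rw [extCuts_last]; exact (h01 j hj).2)
      refine ⟨i, hi, ?_, hm⟩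
      have : ¬ ((i % 2 = 0) ↔ b = true) := fun hb =>
        h ((hB j hj).1 ((mem_altPiece_iff _ _ _ _).2 ⟨i, hi, hb, hm⟩))
      simp only [this, h]
  have ind : ∀ j, j ≤ k + 1 → ∀ i, (((i % 2 = 0) ↔ b = true) ↔ j % 2 = 0) →
      p j ∈ Set.Icc (extCuts k c i) (extCuts k c (i + 1)) → j ≤ i := by
    intro j
    induction j with
    | zero => intros; omega
    | succ j ih =>
      intro hj i hb hm
      obtain ⟨i', -, hb', hm'⟩ := key j (by omega)
      have h1 := ih (by omega) i' hb' hm'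
      have h2 := hlt j (by omega)
      have h3 : i' ≤ i := by
        by_contra hcon
        have : extCuts k c (i + 1) ≤ extCuts k c i' := extCuts_mono k c hc (by omega)
        linarith [hm.2, hm'.1]
      have h4 : i' ≠ i := by
        rintro rfl
        have : (j + 1) % 2 = 0 ↔ j % 2 = 0 := hb.symm.trans hb'
        omega
      omega
  obtain ⟨i, hi, hb, hm⟩ := key (k + 1) le_rfl
  have := ind (k + 1) le_rfl i hb hm
  omega

lemma altPiece_subset (k : ℕ) (c : Fin k → ℝ) (hc : ValidCuts k c) (b : Bool) :
    altPiece k c b ⊆ Set.Icc 0 1 := by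
  intro t ht
  obtain ⟨i, hi, -, h1, h2⟩ := (mem_altPiece_iff _ _ _ _).1 ht
  constructor
  · have := extCuts_mono k c hc (Nat.zero_le i)
    rw [extCuts_zero] at this; linarith
  · have : extCuts k c (i + 1) ≤ extCuts k c (k + 1) := extCuts_mono k c hc (by omega)
    rw [extCuts_last] at this; linarith

lemma altPiece_meas (k : ℕ) (c : Fin k → ℝ) (b : Bool) : MeasurableSet (altPiece k c b) := by
  unfold altPiece
  refine Finset.measurableSet_biUnion _ fun i _ => ?_
  split_ifs
  · exact measurableSet_Icc
  · exact MeasurableSet.empty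

lemma ell_eq (k : ℕ) : ell k = 2 / (3 * (2 * ((k / 2 : ℕ) : ℝ) + 1)) := by
  unfold ell
  have : (0:ℝ) ≤ ((k / 2 : ℕ) : ℝ) := Nat.cast_nonneg _
  field_simp

lemma ell_pos (k : ℕ) : 0 < ell k := by
  rw [ell_eq]; positivity

lemma nHigh_ell (k : ℕ) :
    1 - nHigh k * ell k = (4 * ((k / 2 : ℕ) : ℝ) + 1) / (3 * (2 * ((k / 2 : ℕ) : ℝ) + 1)) := by
  rw [ell_eq, nHigh]
  have : (0:ℝ) ≤ ((k / 2 : ℕ) : ℝ) := Nat.cast_nonneg _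
  push_cast
  field_simp
  ring

lemma nLow_pos (k : ℕ) (hk : 2 ≤ k) : (0:ℝ) < nLow k := by
  have : 0 < nLow k := by unfold nLow; omega
  exact_mod_cast this

lemma nLow_lowLen (k : ℕ) (hk : 2 ≤ k) : nLow k * lowLen k = 1 - nHigh k * ell k := by
  have := nLow_pos k hk
  unfold lowLen
  field_simp

lemma lowLen_pos (k : ℕ) (hk : 2 ≤ k) : 0 < lowLen k := by
  have := nLow_pos k hk
  unfold lowLen
  rw [nHigh_ell]
  positivity

lemma bd_succ_even (k j : ℕ) (hj : j % 2 = 0) : bd k (j + 1) = bd k j + ell k := by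
  unfold bd
  have h1 : (j + 1 + 1) / 2 = (j + 1) / 2 + 1 := by omega
  have h2 : (j + 1) / 2 = j / 2 := by omega
  rw [h1, h2]; push_cast; ring

lemma bd_succ_odd (k j : ℕ) (hj : j % 2 = 1) : bd k (j + 1) = bd k j + lowLen k := by
  unfold bd
  have h1 : (j + 1 + 1) / 2 = (j + 1) / 2 := by omega
  have h2 : (j + 1) / 2 = j / 2 + 1 := by omega
  rw [h1, h2]; push_cast; ring

lemma bd_strictMono (k : ℕ) (hk : 2 ≤ k) : StrictMono (bd k) := by
  refine strictMono_nat_of_lt_succ fun j => ?_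
  rcases Nat.mod_two_eq_zero_or_one j with h | h
  · rw [bd_succ_even k j h]; linarith [ell_pos k]
  · rw [bd_succ_odd k j h]; linarith [lowLen_pos k hk]

lemma bd_zero (k : ℕ) : bd k 0 = 0 := by simp [bd]

lemma bd_one (k : ℕ) : bd k 1 = ell k := by simp [bd]

lemma bd_last (k : ℕ) (hk : 2 ≤ k) : bd k (k + 1) = 1 := by
  have h := nLow_lowLen k hk
  have h1 : (k + 1 + 1) / 2 = nHigh k := by unfold nHigh; omega
  have h2 : (k + 1) / 2 = nLow k := rfl
  unfold bd
  rw [h1, h2]; linarith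

lemma sum_even (x : ℝ) (n : ℕ) :
    ∑ j ∈ Finset.range n, (if j % 2 = 0 then x else 0) = ((n + 1) / 2 : ℕ) * x := by
  induction n with
  | zero => simp
  | succ n ih =>
    rw [Finset.sum_range_succ, ih]
    rcases Nat.mod_two_eq_zero_or_one n with h | h
    · have : (n + 1 + 1) / 2 = (n + 1) / 2 + 1 := by omega
      rw [this]; simp [h]; ring
    · have : (n + 1 + 1) / 2 = (n + 1) / 2 := by omega
      rw [this]; simp [h]

lemma sum_odd (x : ℝ) (n : ℕ) :
    ∑ j ∈ Finset.range n, (if j % 2 = 1 then x else 0) = (n / 2 : ℕ) * x := by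
  induction n with
  | zero => simp
  | succ n ih =>
    rw [Finset.sum_range_succ, ih]
    rcases Nat.mod_two_eq_zero_or_one n with h | h
    · have : (n + 1) / 2 = n / 2 := by omega
      rw [this]; simp [h]
    · have : (n + 1) / 2 = n / 2 + 1 := by omega
      rw [this]; simp [h]; ring

lemma Hset_meas (k : ℕ) : MeasurableSet (Hset k) := by
  unfold Hset
  refine Finset.measurableSet_biUnion _ fun i _ => ?_
  split_ifs
  · exact measurableSet_Icc
  · exact MeasurableSet.empty

lemma vol_Hset (k : ℕ) (hk : 2 ≤ k) : volume.real (Hset k) = nHigh k * ell k := by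
  unfold Hset
  have hfin : ∀ j ∈ Finset.range (k + 1), volume
      (if j % 2 = 0 then Set.Icc (bd k j) (bd k (j + 1)) else ∅) ≠ ⊤ := by
    intro i _
    split_ifs <;> simp
  rw [measureReal_biUnion_finset (h := hfin)]
  · have : ∀ j ∈ Finset.range (k + 1), volume.real
        (if j % 2 = 0 then Set.Icc (bd k j) (bd k (j + 1)) else ∅)
        = if j % 2 = 0 then ell k else 0 := by
      intro j _
      split_ifs with h
      · rw [Real.volume_real_Icc_of_le (bd_strictMono k hk (Nat.lt_succ_self j)).le,
          bd_succ_even k j h]; ring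
      · simp
    rw [Finset.sum_congr rfl this, sum_even]
    congr 2
    unfold nHigh; omega
  · have aux : ∀ i j : ℕ, i < j → Disjoint
        (if i % 2 = 0 then Set.Icc (bd k i) (bd k (i + 1)) else ∅)
        (if j % 2 = 0 then Set.Icc (bd k j) (bd k (j + 1)) else ∅) := by
      intro i j hij
      split_ifs with h1 h2
      · rw [Set.disjoint_left]
        intro x hx hy
        have : bd k (i + 1) < bd k j := bd_strictMono k hk (by omega)
        linarith [hx.2, hy.1]
      all_goals simp
    intro i _ j _ hij
    rcases lt_or_gt_of_ne hij with h | h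
    · exact aux i j h
    · exact (aux j i h).symm
  · intro i _
    split_ifs
    · exact measurableSet_Icc
    · exact MeasurableSet.empty

lemma vol_Lset (k : ℕ) (hk : 2 ≤ k) : volume.real (Lset k) = nLow k * lowLen k := by
  unfold Lset
  have hfin : ∀ j ∈ Finset.range (k + 1), volume
      (if j % 2 = 1 then Set.Ioo (bd k j) (bd k (j + 1)) else ∅) ≠ ⊤ := by
    intro i _
    split_ifs <;> simp
  rw [measureReal_biUnion_finset (h := hfin)]
  · have : ∀ j ∈ Finset.range (k + 1), volume.real
        (if j % 2 = 1 then Set.Ioo (bd k j) (bd k (j + 1)) else ∅)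
        = if j % 2 = 1 then lowLen k else 0 := by
      intro j _
      split_ifs with h
      · rw [Real.volume_real_Ioo_of_le (bd_strictMono k hk (Nat.lt_succ_self j)).le,
          bd_succ_odd k j h]; ring
      · simp
    rw [Finset.sum_congr rfl this, sum_odd]
    rfl
  · have aux : ∀ i j : ℕ, i < j → Disjoint
        (if i % 2 = 1 then Set.Ioo (bd k i) (bd k (i + 1)) else ∅)
        (if j % 2 = 1 then Set.Ioo (bd k j) (bd k (j + 1)) else ∅) := by
      intro i j hij
      split_ifs with h1 h2
      · rw [Set.disjoint_left]
        intro x hx hy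
        have : bd k (i + 1) < bd k j := bd_strictMono k hk (by omega)
        linarith [hx.2, hy.1]
      all_goals simp
    intro i _ j _ hij
    rcases lt_or_gt_of_ne hij with h | h
    · exact aux i j h
    · exact (aux j i h).symm
  · intro i _
    split_ifs
    · exact measurableSet_Ioo
    · exact MeasurableSet.empty

lemma half_pos' (k : ℕ) (hk : 2 ≤ k) : (1:ℝ) ≤ ((k / 2 : ℕ) : ℝ) := by
  have : 1 ≤ k / 2 := by omega
  exact_mod_cast this

lemma lowDens_eq (k : ℕ) (hk : 2 ≤ k) :
    lowDens k = 3 * ((k / 2 : ℕ) : ℝ) / (4 * ((k / 2 : ℕ) : ℝ) + 1) := by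
  have h1 : (volume (Hset k)).toReal = nHigh k * ell k := vol_Hset k hk
  have h2 : (volume (Lset k)).toReal = 1 - nHigh k * ell k :=
    (vol_Lset k hk).trans (nLow_lowLen k hk)
  have h3 := nHigh_ell k
  have hm := half_pos' k hk
  unfold lowDens
  rw [h1, h2]
  have h4 : (nHigh k : ℝ) * ell k
      = 1 - (4 * ((k / 2 : ℕ) : ℝ) + 1) / (3 * (2 * ((k / 2 : ℕ) : ℝ) + 1)) := by linarith
  rw [h3, h4]
  field_simp
  ring

lemma sigma0_integral (k : ℕ) (B : Set ℝ) (hB : MeasurableSet B) (hfin : volume B ≠ ⊤) :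
    IntegrableOn (sigma0 k) B ∧ ∫ x in B, sigma0 k x
      = lowDens k * volume.real B + (3 / 2 - lowDens k) * volume.real (Hset k ∩ B) := by
  have e : sigma0 k = fun x => lowDens k + (Hset k).indicator (fun _ => 3 / 2 - lowDens k) x := by
    funext x
    unfold sigma0
    by_cases h : x ∈ Hset k <;> simp [h]
  have i1 : IntegrableOn (fun _ : ℝ => lowDens k) B := integrableOn_const hfin
  have i2 : IntegrableOn ((Hset k).indicator (fun _ : ℝ => 3 / 2 - lowDens k)) B :=
    IntegrableOn.indicator (integrableOn_const hfin) (Hset_meas k)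
  rw [e]
  refine ⟨i1.add i2, ?_⟩
  rw [integral_add i1 i2, integral_indicator (Hset_meas k), setIntegral_const,
    setIntegral_const, measureReal_restrict_apply (Hset_meas k)]
  simp only [smul_eq_mul]
  ring

lemma spike_eq (k : ℕ) (w z : ℝ) (hz : z ∈ Set.Icc (5/6 : ℝ) (11/12))
    (hw : w ∈ Set.Ioc (0 : ℝ) (1/48)) (x : ℝ) :
    sigmaSpike k w z x = sigma0 k x +
      ((Set.Ioc ((z - w) * ell k) (z * ell k)).indicator (fun _ => (1/2 : ℝ)) x -
       (Set.Ioo (z * ell k) ((z + w) * ell k)).indicator (fun _ => (1/2 : ℝ)) x) := by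
  have hl := ell_pos k
  have m1 : x / ell k ∈ Set.Ioc (z - w) z ↔ x ∈ Set.Ioc ((z - w) * ell k) (z * ell k) := by
    simp only [Set.mem_Ioc, lt_div_iff₀ hl, div_le_iff₀ hl]
  have m2 : x / ell k ∈ Set.Ioo z (z + w) ↔ x ∈ Set.Ioo (z * ell k) ((z + w) * ell k) := by
    simp only [Set.mem_Ioo, lt_div_iff₀ hl, div_lt_iff₀ hl]
  have hH : ∀ y, 0 ≤ y → y ≤ ell k → sigma0 k y = 3 / 2 := by
    intro y h0 h1
    have : y ∈ Hset k := by
      unfold Hset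
      simp only [Set.mem_iUnion, Finset.mem_range, exists_prop]
      refine ⟨0, by omega, ?_⟩
      simp only [Nat.zero_mod, if_true, zero_add, bd_zero, bd_one]
      exact ⟨h0, h1⟩
    simp [sigma0, this]
  unfold sigmaSpike
  simp only [m1, m2]
  obtain ⟨hz1, hz2⟩ := hz
  obtain ⟨hw1, hw2⟩ := hw
  by_cases h1 : x ∈ Set.Ioc ((z - w) * ell k) (z * ell k)
  · have h2 : x ∉ Set.Ioo (z * ell k) ((z + w) * ell k) := fun h => by
      linarith [h.1, h1.2]
    rw [hH x (by nlinarith [h1.1]) (by nlinarith [h1.2])]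
    simp only [h1, h2, if_true, Set.indicator_of_mem, Set.indicator_of_notMem, not_false_iff]
    norm_num
  · by_cases h2 : x ∈ Set.Ioo (z * ell k) ((z + w) * ell k)
    · rw [hH x (by nlinarith [h2.1]) (by nlinarith [h2.2])]
      simp only [h1, h2, if_true, if_false, Set.indicator_of_mem, Set.indicator_of_notMem,
        not_false_iff]
      norm_num
    · simp [h1, h2]

lemma spike_integral (k : ℕ) (w z : ℝ) (hz : z ∈ Set.Icc (5/6 : ℝ) (11/12))
    (hw : w ∈ Set.Ioc (0 : ℝ) (1/48)) (B : Set ℝ) (hB : MeasurableSet B) (hfin : volume B ≠ ⊤) :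
    ∫ x in B, sigmaSpike k w z x = (∫ x in B, sigma0 k x) +
      (1/2 * volume.real (Set.Ioc ((z - w) * ell k) (z * ell k) ∩ B) -
       1/2 * volume.real (Set.Ioo (z * ell k) ((z + w) * ell k) ∩ B)) := by
  have i1 : IntegrableOn ((Set.Ioc ((z - w) * ell k) (z * ell k)).indicator
      (fun _ => (1/2 : ℝ))) B :=
    IntegrableOn.indicator (integrableOn_const hfin) measurableSet_Ioc
  have i2 : IntegrableOn ((Set.Ioo (z * ell k) ((z + w) * ell k)).indicator
      (fun _ => (1/2 : ℝ))) B :=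
    IntegrableOn.indicator (integrableOn_const hfin) measurableSet_Ioo
  have i3 := (sigma0_integral k B hB hfin).1
  simp_rw [spike_eq k w z hz hw]
  have e1 := integral_add i3 (i1.sub i2)
  simp only [Pi.sub_apply] at e1
  rw [e1, integral_sub i1 i2, integral_indicator measurableSet_Ioc,
    integral_indicator measurableSet_Ioo, setIntegral_const, setIntegral_const,
    measureReal_restrict_apply measurableSet_Ioc, measureReal_restrict_apply measurableSet_Ioo]
  simp only [smul_eq_mul]
  ring

set_option maxHeartbeats 2000000

/-- distinguishing partitions are bad for Alice: let `k ≥ 2`,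
`z ∈ [5/6, 11/12]`, `w ∈ (0, 1/48]`, and let `(A, B)` be the alternating partition of
`[0,1]` induced by `k` cut points (so `B = altPiece k c b` for some `b`). If
`∫_B σ_{w;z}^k > 1/2` and `∫_B σ₀^k < 1/2` — i.e. Bobs with densities `σ_{w;z}^k` and
`σ₀^k` strictly prefer different pieces — then `μ(B) ≤ 2/3 − 1/(6k)`. -/
theorem distinguishing_partition_suboptimal (k : ℕ) (hk : 2 ≤ k)
    (z : ℝ) (hz : z ∈ Set.Icc (5/6 : ℝ) (11/12))
    (w : ℝ) (hw : w ∈ Set.Ioc (0 : ℝ) (1/48))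
    (c : Fin k → ℝ) (hc : ValidCuts k c) (b : Bool)
    (hspike : 1/2 < ∫ x in altPiece k c b, sigmaSpike k w z x)
    (hbase : (∫ x in altPiece k c b, sigma0 k x) < 1/2) :
    (volume (altPiece k c b)).toReal ≤ 2/3 - 1/(6 * k) := by
  have hl := ell_pos k
  have hmpos := half_pos' k hk
  have hN := nLow_pos k hk
  have hBm := altPiece_meas k c b
  have hBsub := altPiece_subset k c hc b
  have hBfin : volume (altPiece k c b) ≠ ⊤ :=
    ne_top_of_le_ne_top (by simp) (measure_mono hBsub)
  have hbd := bd_strictMono k hk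
  have hd := lowDens_eq k hk
  have hsp := spike_integral k w z hz hw _ hBm hBfin
  have hs0 := (sigma0_integral k _ hBm hBfin).2
  have hkpos : (2:ℝ) ≤ k := by exact_mod_cast hk
  change volume.real (altPiece k c b) ≤ _
  set B := altPiece k c b with hBdef
  set m : ℝ := ((k / 2 : ℕ) : ℝ) with hm
  have hmk : m ≤ k := by rw [hm]; exact_mod_cast (by omega : k / 2 ≤ k)
  have hNk : (nLow k : ℝ) ≤ k := by
    have : nLow k ≤ k := by unfold nLow; omega
    exact_mod_cast this
  have hd32 : 3 / 2 - lowDens k = 3 * (2 * m + 1) / (2 * (4 * m + 1)) := by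
    rw [hd]; field_simp; ring
  have hdpos : 0 < 3 / 2 - lowDens k := by rw [hd32]; positivity
  have hsplit : volume.real B = volume.real (Hset k ∩ B) + volume.real (B \ Hset k) := by
    rw [Set.inter_comm, measureReal_inter_add_sdiff (Hset_meas k) hBfin]
  -- Case a: no high interval is contained in `B`
  by_contra hcon
  rw [not_le] at hcon
  have bd01 : ∀ j, j ≤ k → Set.Ioo (bd k j) (bd k (j + 1)) ⊆ Set.Icc 0 1 := by
    intro j hj x hx
    have h1 : bd k 0 ≤ bd k j := hbd.monotone (Nat.zero_le _)
    have h2 : bd k (j + 1) ≤ bd k (k + 1) := hbd.monotone (by omega)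
    rw [bd_zero] at h1
    rw [bd_last k hk] at h2
    exact ⟨by linarith [hx.1], by linarith [hx.2]⟩
  have hHigh : ∀ j, j ≤ k → j % 2 = 0 → ∃ q ∈ Set.Ioo (bd k j) (bd k (j + 1)), q ∉ B := by
    intro j hj hj2
    by_contra hno
    push Not at hno
    have hsub : Set.Ioo (bd k j) (bd k (j + 1)) ⊆ Hset k ∩ B := by
      intro q hq
      refine ⟨?_, hno q hq⟩
      unfold Hset
      simp only [Set.mem_iUnion, Finset.mem_range, exists_prop]
      refine ⟨j, by omega, ?_⟩
      rw [if_pos hj2]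
      exact Set.Ioo_subset_Icc_self hq
    have hx : ell k ≤ volume.real (Hset k ∩ B) := by
      have h1 := measureReal_mono hsub (ne_top_of_le_ne_top hBfin (measure_mono inter_subset_right))
      rw [Real.volume_real_Ioo_of_le (hbd (Nat.lt_succ_self j)).le, bd_succ_even k j hj2] at h1
      linarith
    have h2 : (3 / 2 - lowDens k) * ell k = 1 / (4 * m + 1) := by
      rw [hd32, ell_eq, ← hm]; field_simp
    have h3 : lowDens k * volume.real B + 1 / (4 * m + 1) < 1 / 2 := by
      have := mul_le_mul_of_nonneg_left hx hdpos.le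
      linarith
    have h4 : 3 * m * volume.real B < (4 * m - 1) / 2 := by
      rw [hd] at h3
      have h5 : 3 * m / (4 * m + 1) * volume.real B + 1 / (4 * m + 1)
        = (3 * m * volume.real B + 1) / (4 * m + 1) := by ring
      rw [h5, div_lt_iff₀ (by positivity)] at h3
      linarith
    have h6 : 1 / (6 * (k:ℝ)) ≤ 1 / (6 * m) :=
      one_div_le_one_div_of_le (by positivity) (by linarith)
    have h7 : 2 / 3 - 1 / (6 * m) < volume.real B := by linarith
    have h8 : 3 * m * (2 / 3 - 1 / (6 * m)) < 3 * m * volume.real B :=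
      mul_lt_mul_of_pos_left h7 (by positivity)
    have h9 : 3 * m * (2 / 3 - 1 / (6 * m)) = (4 * m - 1) / 2 := by
      field_simp; ring
    linarith
  have hLow : ∀ j, j ≤ k → j % 2 = 1 → ∃ q ∈ Set.Ioo (bd k j) (bd k (j + 1)), q ∈ B := by
    intro j hj hj2
    by_contra hno
    push Not at hno
    have hdisjH : Disjoint (Hset k) (Set.Ioo (bd k j) (bd k (j + 1))) := by
      rw [Set.disjoint_left]
      intro q hq hq2
      unfold Hset at hq
      simp only [Set.mem_iUnion, Finset.mem_range, exists_prop] at hq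
      obtain ⟨i, hi, hq⟩ := hq
      by_cases hi2 : i % 2 = 0
      · rw [if_pos hi2] at hq
        rcases lt_or_gt_of_ne (show i ≠ j by rintro rfl; omega) with h | h
        · have : bd k (i + 1) ≤ bd k j := hbd.monotone (by omega)
          linarith [hq.2, hq2.1]
        · have : bd k (j + 1) ≤ bd k i := hbd.monotone (by omega)
          linarith [hq.1, hq2.2]
      · rw [if_neg hi2] at hq; exact hq
    have hH01 : Hset k ⊆ Set.Icc 0 1 := by
      intro q hq
      unfold Hset at hq
      simp only [Set.mem_iUnion, Finset.mem_range, exists_prop] at hq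
      obtain ⟨i, hi, hq⟩ := hq
      by_cases hi2 : i % 2 = 0
      · rw [if_pos hi2] at hq
        have h1 : bd k 0 ≤ bd k i := hbd.monotone (Nat.zero_le _)
        have h2 : bd k (i + 1) ≤ bd k (k + 1) := hbd.monotone (by omega)
        rw [bd_zero] at h1
        rw [bd_last k hk] at h2
        exact ⟨by linarith [hq.1], by linarith [hq.2]⟩
      · rw [if_neg hi2] at hq; exact hq.elim
    have hHfin : volume (Hset k) ≠ ⊤ := ne_top_of_le_ne_top (by simp) (measure_mono hH01)
    have hu : volume.real (Hset k ∪ Set.Ioo (bd k j) (bd k (j + 1)))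
        = nHigh k * ell k + lowLen k := by
      rw [measureReal_union hdisjH measurableSet_Ioo hHfin (by simp), vol_Hset k hk,
        Real.volume_real_Ioo_of_le (hbd (Nat.lt_succ_self j)).le, bd_succ_odd k j hj2]
      ring
    have hdisj2 : Disjoint (B \ Hset k) (Hset k ∪ Set.Ioo (bd k j) (bd k (j + 1))) := by
      rw [Set.disjoint_left]
      rintro q ⟨hq1, hq2⟩ (h | h)
      · exact hq2 h
      · exact hno q h hq1
    have hv : volume.real (B \ Hset k) + (nHigh k * ell k + lowLen k) ≤ 1 := by
      rw [← hu, ← measureReal_union hdisj2 ((Hset_meas k).union measurableSet_Ioo)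
        (ne_top_of_le_ne_top hBfin (measure_mono sdiff_subset))
        (ne_top_of_le_ne_top (by simp) (measure_mono (union_subset hH01 (bd01 j hj))))]
      have : volume.real (Set.Icc (0:ℝ) 1) = 1 := by simp
      rw [← this]
      exact measureReal_mono
        (union_subset (sdiff_subset.trans hBsub) (union_subset hH01 (bd01 j hj))) (by simp)
    have hNl := nLow_lowLen k hk
    have hc1 : (3 / 2 - lowDens k) * (nLow k * lowLen k) = 1 / 2 := by
      rw [hNl, nHigh_ell, hd32, ← hm]; field_simp
    have hc2 : (3 / 2 - lowDens k) * lowLen k = 1 / (2 * nLow k) := by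
      field_simp
      linarith
    have hvle : volume.real (B \ Hset k) ≤ nLow k * lowLen k - lowLen k := by linarith
    have h3 := mul_le_mul_of_nonneg_left hvle hdpos.le
    have h4 : 3 / 2 * volume.real B < 1 / 2 + (1 / 2 - 1 / (2 * nLow k)) := by
      rw [hs0] at hbase
      nlinarith
    have h5 : 1 / (6 * (k:ℝ)) ≤ 1 / (6 * (nLow k : ℝ)) :=
      one_div_le_one_div_of_le (by positivity) (by linarith)
    have h6 : 1 / (2 * (nLow k : ℝ)) = 3 * (1 / (6 * (nLow k : ℝ))) := by
      field_simp; norm_num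
    have h7 : 0 < 1 / (6 * (nLow k : ℝ)) := by positivity
    linarith
  -- the spike
  have hcmp : volume.real (Set.Ioo (z * ell k) ((z + w) * ell k) ∩ B)
      < volume.real (Set.Ioc ((z - w) * ell k) (z * ell k) ∩ B) := by linarith
  have hwl : 0 < w * ell k := mul_pos hw.1 hl
  have hz1 := hz.1
  have hz2 := hz.2
  have hw2 := hw.2
  obtain ⟨p0, hp0, hp0B⟩ : ∃ p ∈ Set.Ioc ((z - w) * ell k) (z * ell k), p ∈ B := by
    by_contra hno
    push Not at hno
    have : Set.Ioc ((z - w) * ell k) (z * ell k) ∩ B = ∅ := by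
      ext q; simp only [Set.mem_inter_iff, Set.mem_empty_iff_false, iff_false, not_and]
      exact hno q
    rw [this, measureReal_empty] at hcmp
    exact absurd hcmp (not_lt.mpr measureReal_nonneg)
  obtain ⟨p1, hp1, hp1B⟩ : ∃ p ∈ Set.Ioo (z * ell k) ((z + w) * ell k), p ∉ B := by
    by_contra hno
    push Not at hno
    rw [Set.inter_eq_left.mpr hno, Real.volume_real_Ioo_of_le (by nlinarith)] at hcmp
    have h1 : volume.real (Set.Ioc ((z - w) * ell k) (z * ell k) ∩ B)
        ≤ volume.real (Set.Ioc ((z - w) * ell k) (z * ell k)) :=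
      measureReal_mono inter_subset_left (by simp)
    rw [Real.volume_real_Ioc_of_le (by nlinarith)] at h1
    nlinarith
  have hq : ∀ j, ∃ q, j ≤ k → q ∈ Set.Ioo (bd k j) (bd k (j + 1)) ∧ (q ∈ B ↔ j % 2 = 1) := by
    intro j
    by_cases hj : j ≤ k
    · rcases Nat.mod_two_eq_zero_or_one j with h | h
      · obtain ⟨q, h1, h2⟩ := hHigh j hj h
        exact ⟨q, fun _ => ⟨h1, by simp [h, h2]⟩⟩
      · obtain ⟨q, h1, h2⟩ := hLow j hj h
        exact ⟨q, fun _ => ⟨h1, by simp [h, h2]⟩⟩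
    · exact ⟨0, fun h => absurd h hj⟩
  choose q hq using hq
  have hp0pos : 0 < p0 := by nlinarith [hp0.1]
  have hp1l : p1 < ell k := by nlinarith [hp1.2]
  have hl1 : ell k ≤ 1 := by
    have : bd k 1 ≤ bd k (k + 1) := hbd.monotone (by omega)
    rwa [bd_one, bd_last k hk] at this
  have hp01 : p0 < p1 := lt_of_le_of_lt hp0.2 hp1.1
  refine no_alternation k c hc b
    (fun j => if j = 0 then p0 else if j = 1 then p1 else q (j - 1)) ?_ ?_ ?_
  · intro j hj
    rcases j with _ | _ | j
    · simpa using hp01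
    · have h := (hq 1 (by omega)).1.1
      rw [bd_one] at h
      simpa using hp1l.trans h
    · have h1 := (hq (j + 1) (by omega)).1.2
      have h2 := (hq (j + 1 + 1) (by omega)).1.1
      simpa using h1.trans h2
  · intro j hj
    rcases j with _ | _ | j
    · exact ⟨hp0pos.le, by simp only [if_true]; linarith⟩
    · simp only [zero_add, one_ne_zero, if_false, if_true]
      exact ⟨by linarith, by linarith⟩
    · simpa using bd01 (j + 1) (by omega) (hq (j + 1) (by omega)).1
  · intro j hj
    rcases j with _ | _ | j
    · simpa using hp0B
    · simpa using hp1B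
    · have h := (hq (j + 1) (by omega)).2
      have h2 : (j + 1 + 1) % 2 = 0 ↔ (j + 1) % 2 = 1 := by omega
      rw [h2, ← h]
      simp [hBdef]

end
end
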